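/- Let h be a framing datum with image A = h(ℝ × [0,1]) and associated path X, and assume the topological frontier of A in ℂ is contained in h(ℝ × {0}) ∪ h(ℝ × {1}). Let f : ℝ × ℝ → ℂ be X-holomorphic on ℝ × [0,1] with f(θ + 2π, t) = f(θ, t), and let g : A → ℂ be the unique continuous map with f = g ∘ h on ℝ × [0,1]. Assume further that for every z in the interior of A one has (1/(2πi)) ∫₀^{2π} (∂h/∂θ)(θ,1)/(h(θ,1) − z) dθ = 1 and (1/(2πi)) ∫₀^{2π} (∂h/∂θ)(θ,0)/(h(θ,0) − z) dθ = 0. Then for every z in the interior of A: g(z) = (1/(2πi)) ( ∫₀^{2π} f(θ,1)·(∂h/∂θ)(θ,1)/(h(θ,1) − z) dθ − ∫₀^{2π} f(θ,0)·(∂h/∂θ)(θ,0)/(h(θ,0) − z) dθ ). -/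

import Mathlib

open Set Complex Real

/-!
`X`-holomorphy of `f` means `df = k dh` for a function `k`, so for every `w` and `c` the form
`(f - c) / (h - w) dh` is closed away from `h ⁻¹' {w}`. If `w` is a regular value of `h` and
`f = c` over `w`, its coefficient extends continuously by `k` across the finitely many points over
`w`, and Stokes on the periodic strip equates its integrals over the two boundary curves. With
`c = g w` this is the formula at `w`. Regular values are dense by Sard, and both sides are
continuous in `w` off the boundary curves. Finally, the interior of `A` does not meet these curves:
the integral of `dh / (h - z)` jumps by `2πi` as `z` crosses a simple regular closed curve,
whereas it is constant on the interior.
-/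

open Filter Topology Asymptotics MeasureTheory

theorem intervalIntegrable_div_sub {a b : ℝ} {γ φ : ℝ → ℂ} {w : ℂ}
    (hφ : IntervalIntegrable φ volume a b) (hγ : ContinuousOn γ (uIcc a b))
    (hw : ∀ θ ∈ uIcc a b, γ θ ≠ w) :
    IntervalIntegrable (fun θ => φ θ / (γ θ - w)) volume a b := by
  simp only [div_eq_mul_inv]
  exact hφ.mul_continuousOn
    ((hγ.sub continuousOn_const).inv₀ fun θ hθ => sub_ne_zero.2 (hw θ hθ))

theorem continuousAt_integral_div_sub {a b : ℝ} {γ φ : ℝ → ℂ} {w : ℂ}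
    (hφ : IntervalIntegrable φ volume a b) (hγ : ContinuousOn γ (uIcc a b))
    (hw : ∀ θ ∈ uIcc a b, γ θ ≠ w) :
    ContinuousAt (fun v => ∫ θ in a..b, φ θ / (γ θ - v)) w := by
  obtain ⟨δ, hδ, hδγ⟩ := isCompact_uIcc.exists_forall_le' (f := fun θ => ‖γ θ - w‖)
    (hγ.sub continuousOn_const).norm fun θ hθ => norm_pos_iff.2 (sub_ne_zero.2 (hw θ hθ))
  refine intervalIntegral.continuousAt_of_dominated_interval (bound := fun θ => ‖φ θ‖ / (δ / 2))
    (.of_forall fun v => ?_) ?_ (hφ.norm.div_const _) (.of_forall fun θ hθ => ?_)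
  · exact (hφ.def'.aestronglyMeasurable.aemeasurable.div
      (((hγ.mono uIoc_subset_uIcc).aestronglyMeasurable
        measurableSet_uIoc).aemeasurable.sub_const v)).aestronglyMeasurable
  · filter_upwards [Metric.ball_mem_nhds w (half_pos hδ)] with v hv
    refine .of_forall fun θ hθ => ?_
    have hvw : ‖v - w‖ < δ / 2 := by simpa [dist_eq_norm] using hv
    have htriangle : ‖γ θ - w‖ ≤ ‖γ θ - v‖ + ‖v - w‖ := norm_sub_le_norm_sub_add_norm_sub ..
    rw [norm_div]
    gcongr
    linarith [hδγ θ (uIoc_subset_uIcc hθ)]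
  · exact continuousAt_const.div (continuousAt_const.sub continuousAt_id)
      (sub_ne_zero.2 (hw θ (uIoc_subset_uIcc hθ)))

theorem eventually_forall_mem_ne {X Y : Type*} [TopologicalSpace X] [TopologicalSpace Y]
    [T2Space Y] {K : Set X} {γ : X → Y} {y : Y} (hK : IsCompact K) (hγ : ContinuousOn γ K)
    (hy : ∀ x ∈ K, γ x ≠ y) : ∀ᶠ v in 𝓝 y, ∀ x ∈ K, γ x ≠ v := by
  have hy' : y ∉ γ '' K := fun ⟨x, hx, hxy⟩ => hy x hx hxy
  filter_upwards [(hK.image_of_continuousOn hγ).isClosed.isOpen_compl.mem_nhds hy']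
    with v hv x hx hxv using hv ⟨x, hx, hxv⟩

theorem injOn_Ico_add_of_periodic {X : Type*} {γ : ℝ → X} {T : ℝ} (hT : 0 < T)
    (hper : Function.Periodic γ T) (hinj : InjOn γ (Ico 0 T)) (a : ℝ) :
    InjOn γ (Ico a (a + T)) := by
  intro x hx y hy hxy
  have map_toIcoMod (b x : ℝ) : γ (toIcoMod hT b x) = γ x := hper.sub_zsmul_eq _
  have hmem (x : ℝ) : toIcoMod hT 0 x ∈ Ico 0 T := by simpa using toIcoMod_mem_Ico hT 0 x
  have hmod : toIcoMod hT 0 x = toIcoMod hT 0 y :=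
    hinj (hmem x) (hmem y) (by rw [map_toIcoMod, map_toIcoMod, hxy])
  rw [← (toIcoMod_eq_self hT).2 hx, ← (toIcoMod_eq_self hT).2 hy]
  exact (toIcoMod_inj hT).2 ((toIcoMod_inj hT).1 hmod)

theorem integral_div_eq_log_sub_log {F F' : ℝ → ℂ} {a b : ℝ}
    (hF : ∀ θ ∈ uIcc a b, HasDerivAt F (F' θ) θ) (hF' : IntervalIntegrable F' volume a b)
    (hslit : ∀ θ ∈ uIcc a b, F θ ∈ slitPlane) :
    ∫ θ in a..b, F' θ / F θ = log (F b) - log (F a) := by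
  have hFc : ContinuousOn F (uIcc a b) := fun θ hθ => (hF θ hθ).continuousAt.continuousWithinAt
  have hint : IntervalIntegrable (fun θ => F' θ / F θ) volume a b := by
    simpa only [sub_zero] using
      intervalIntegrable_div_sub hF' hFc fun θ hθ => slitPlane_ne_zero (hslit θ hθ)
  exact intervalIntegral.integral_eq_sub_of_hasDerivAt (f := fun θ => log (F θ))
    (fun θ hθ => (hF θ hθ).clog_real (hslit θ hθ)) hint

theorem sub_div_mem_slitPlane {x z ν : ℂ} (h : ((x - z) / ν).im = 0 → x = z) {ε : ℝ}
    (hε : 0 < ε) : ε - (x - z) / ν ∈ slitPlane := by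
  by_cases him : ((x - z) / ν).im = 0
  · left
    simpa [h him] using hε
  · right
    simpa using him

theorem ne_add_mul_of_mem_slitPlane {x z ν : ℂ} (hν : ν ≠ 0) {ε : ℝ}
    (h : ε - (x - z) / ν ∈ slitPlane) : x ≠ z + ε * ν := by
  rintro rfl
  simp [hν] at h

/-- Dividing by `-ν` turns `γ - (z + ε ν)` into `ε - (γ - z) / ν`, which has a logarithm. -/
theorem integral_div_sub_add_eq_log_sub_log {γ γ' : ℝ → ℂ} {a b : ℝ} {z ν : ℂ} (hν : ν ≠ 0)
    (hγ : ∀ θ ∈ uIcc a b, HasDerivAt γ (γ' θ) θ) (hγ' : IntervalIntegrable γ' volume a b)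
    (hcross : ∀ θ ∈ uIcc a b, ((γ θ - z) / ν).im = 0 → γ θ = z) {ε : ℝ} (hε : 0 < ε) :
    ∫ θ in a..b, γ' θ / (γ θ - (z + ε * ν)) =
      log (ε - (γ b - z) / ν) - log (ε - (γ a - z) / ν) := by
  rw [← integral_div_eq_log_sub_log (F := fun θ => ε - (γ θ - z) / ν)
    (fun θ hθ => (((hγ θ hθ).sub_const z).div_const ν).const_sub (ε : ℂ)) (hγ'.div_const ν).neg
    fun θ hθ => sub_div_mem_slitPlane (hcross θ hθ) hε]
  refine intervalIntegral.integral_congr fun θ hθ => ?_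
  have hslit := sub_div_mem_slitPlane (hcross θ hθ) hε
  have hne := sub_ne_zero.2 (ne_add_mul_of_mem_slitPlane hν hslit)
  have hne' := slitPlane_ne_zero hslit
  rw [div_eq_div_iff hne hne']
  field_simp
  ring

theorem tendsto_log_add_sub_log_sub {v : ℂ} (hv : 0 < v.im) :
    Tendsto (fun ε : ℝ => log (ε + v) - log (ε - v)) (𝓝 0) (𝓝 (π * I)) := by
  have hlog : log v - log (-v) = π * I := by
    rw [Complex.log, Complex.log, arg_neg_eq_arg_sub_pi_of_im_pos hv, norm_neg]
    push_cast
    ring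
  have hcont : ContinuousAt (fun ε : ℝ => log (ε + v) - log (ε - v)) 0 := by
    refine .sub (.clog (by fun_prop) ?_) (.clog (by fun_prop) ?_) <;> right <;> simp [hv.ne']
  simpa [hlog] using hcont.tendsto

theorem tendsto_integral_div_sub_jump_of_crossing {γ γ' : ℝ → ℂ} {a b : ℝ} {z ν : ℂ}
    (hν : ν ≠ 0) (hγ : ∀ θ ∈ uIcc a b, HasDerivAt γ (γ' θ) θ)
    (hγ' : IntervalIntegrable γ' volume a b)
    (hcross : ∀ θ ∈ uIcc a b, ((γ θ - z) / ν).im = 0 → γ θ = z)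
    (ha : 0 < ((γ a - z) / ν).im) (hb : ((γ b - z) / ν).im < 0) :
    Tendsto (fun ε : ℝ => (∫ θ in a..b, γ' θ / (γ θ - (z + ε * ν))) -
      ∫ θ in a..b, γ' θ / (γ θ - (z - ε * ν))) (𝓝[>] 0) (𝓝 (2 * π * I)) := by
  have hlog : Tendsto (fun ε : ℝ =>
      (log (ε + (γ a - z) / ν) - log (ε - (γ a - z) / ν)) +
        (log (ε + -((γ b - z) / ν)) - log (ε - -((γ b - z) / ν))))
      (𝓝[>] 0) (𝓝 (π * I + π * I)) :=
    ((tendsto_log_add_sub_log_sub ha).add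
      (tendsto_log_add_sub_log_sub (by simpa using hb))).mono_left nhdsWithin_le_nhds
  have hcross' : ∀ θ ∈ uIcc a b, ((γ θ - z) / -ν).im = 0 → γ θ = z := fun θ hθ him =>
    hcross θ hθ (by simpa [div_neg] using him)
  rw [show (2 * π * I : ℂ) = π * I + π * I by ring]
  refine hlog.congr' ?_
  filter_upwards [self_mem_nhdsWithin] with ε hε
  rw [integral_div_sub_add_eq_log_sub_log hν hγ hγ' hcross hε, sub_eq_add_neg z, ← mul_neg,
    integral_div_sub_add_eq_log_sub_log (neg_ne_zero.2 hν) hγ hγ' hcross' hε]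
  simp only [div_neg, sub_neg_eq_add, ← sub_eq_add_neg]
  ring

theorem eventually_sign_im_sub_div_eq {γ : ℝ → ℂ} {θ₀ : ℝ} (hγ : deriv γ θ₀ ≠ 0) :
    ∀ᶠ θ in 𝓝 θ₀, SignType.sign ((γ θ₀ - γ θ) / (I * deriv γ θ₀)).im =
      SignType.sign (θ - θ₀) := by
  have hderiv : HasDerivAt (fun θ => ((γ θ₀ - γ θ) / (I * deriv γ θ₀)).im) 1 θ₀ := by
    have hquot := ((differentiableAt_of_deriv_ne_zero hγ).hasDerivAt.const_sub
      (γ θ₀)).div_const (I * deriv γ θ₀)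
    have him := imCLM.hasFDerivAt.comp_hasDerivAt θ₀ hquot
    have hone : imCLM (-deriv γ θ₀ / (I * deriv γ θ₀)) = 1 := by
      rw [neg_div, div_mul_cancel_right₀ hγ]
      simp
    rwa [hone] at him
  exact eventually_nhdsWithin_sign_eq_of_deriv_pos (by rw [hderiv.deriv]; exact one_pos) (by simp)

theorem exists_arc_crossing {γ : ℝ → ℂ} {θ₀ r : ℝ} (hγ : deriv γ θ₀ ≠ 0) (hr : 0 < r) :
    ∃ δ ∈ Ioo 0 r,
      (∀ θ ∈ uIcc (θ₀ - δ) (θ₀ + δ),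
        ((γ θ - γ θ₀) / (I * deriv γ θ₀)).im = 0 → γ θ = γ θ₀) ∧
      0 < ((γ (θ₀ - δ) - γ θ₀) / (I * deriv γ θ₀)).im ∧
      ((γ (θ₀ + δ) - γ θ₀) / (I * deriv γ θ₀)).im < 0 := by
  obtain ⟨s, hs, hsign⟩ :=
    Metric.nhds_basis_closedBall.eventually_iff.1 (eventually_sign_im_sub_div_eq hγ)
  simp only [Real.closedBall_eq_Icc] at hsign
  have hδ : 0 < min s (r / 2) := by positivity
  have hδs : min s (r / 2) ≤ s := min_le_left ..
  have hδr : min s (r / 2) ≤ r / 2 := min_le_right ..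
  have him (θ : ℝ) : ((γ θ - γ θ₀) / (I * deriv γ θ₀)).im =
      -((γ θ₀ - γ θ) / (I * deriv γ θ₀)).im := by
    rw [← neg_im, ← neg_div, neg_sub]
  refine ⟨min s (r / 2), ⟨hδ, by linarith⟩, fun θ hθ hzero => ?_, ?_, ?_⟩
  · rw [uIcc_of_le (by linarith)] at hθ
    have hsignθ := hsign (show θ ∈ _ from ⟨by linarith [hθ.1], by linarith [hθ.2]⟩)
    rw [him, neg_eq_zero] at hzero
    rw [hzero, _root_.sign_zero, eq_comm, _root_.sign_eq_zero_iff,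
      sub_eq_zero] at hsignθ
    rw [hsignθ]
  · have hleft := hsign (show θ₀ - min s (r / 2) ∈ _ from ⟨by linarith, by linarith⟩)
    rw [_root_.sign_neg (show θ₀ - min s (r / 2) - θ₀ < 0 by linarith),
      sign_eq_neg_one_iff] at hleft
    rwa [him, neg_pos]
  · have hright := hsign (show θ₀ + min s (r / 2) ∈ _ from ⟨by linarith, by linarith⟩)
    rw [_root_.sign_pos (show 0 < θ₀ + min s (r / 2) - θ₀ by linarith),
      sign_eq_one_iff] at hright
    rwa [him, neg_lt_zero]

theorem periodic_deriv {F : Type*} [NormedAddCommGroup F] [NormedSpace ℝ F] {γ : ℝ → F} {T : ℝ}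
    (hγ : Function.Periodic γ T) : Function.Periodic (deriv γ) T := fun θ => by
  rw [← deriv_comp_add_const, hγ.funext]

section Curve

variable {γ φ : ℝ → ℂ} {T : ℝ}

theorem integral_div_sub_eq_add_of_periodic (hγ : Continuous γ) (hφ : Continuous φ)
    (hγper : Function.Periodic γ T) (hφper : Function.Periodic φ T) {a b : ℝ} {w : ℂ}
    (hab : ∀ θ ∈ uIcc a b, γ θ ≠ w) (hba : ∀ θ ∈ uIcc b (a + T), γ θ ≠ w) :
    ∫ θ in 0..T, φ θ / (γ θ - w) =
      (∫ θ in a..b, φ θ / (γ θ - w)) + ∫ θ in b..a + T, φ θ / (γ θ - w) := by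
  have hper : Function.Periodic (fun θ => φ θ / (γ θ - w)) T :=
    fun θ => by simp only [hγper θ, hφper θ]
  rw [intervalIntegral.integral_add_adjacent_intervals
    (intervalIntegrable_div_sub (hφ.intervalIntegrable ..) hγ.continuousOn hab)
    (intervalIntegrable_div_sub (hφ.intervalIntegrable ..) hγ.continuousOn hba)]
  simpa using hper.intervalIntegral_add_eq 0 a

theorem tendsto_add_ofReal_mul (z ν : ℂ) : Tendsto (fun ε : ℝ => z + ε * ν) (𝓝[>] 0) (𝓝 z) := by
  have hcont : Continuous fun ε : ℝ => z + ε * ν := by fun_prop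
  simpa using (hcont.tendsto 0).mono_left nhdsWithin_le_nhds

theorem eventually_integral_div_sub_eq_add_of_periodic (hγ : Continuous γ) (hφ : Continuous φ)
    (hγper : Function.Periodic γ T) (hφper : Function.Periodic φ T) {a b : ℝ} {z ν : ℂ}
    (hν : ν ≠ 0) (hcross : ∀ θ ∈ uIcc a b, ((γ θ - z) / ν).im = 0 → γ θ = z)
    (hfar : ∀ θ ∈ uIcc b (a + T), γ θ ≠ z) :
    ∀ᶠ ε : ℝ in 𝓝[>] 0, ∫ θ in 0..T, φ θ / (γ θ - (z + ε * ν)) =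
      (∫ θ in a..b, φ θ / (γ θ - (z + ε * ν))) +
        ∫ θ in b..a + T, φ θ / (γ θ - (z + ε * ν)) := by
  filter_upwards [self_mem_nhdsWithin, (tendsto_add_ofReal_mul z ν).eventually
    (eventually_forall_mem_ne isCompact_uIcc hγ.continuousOn hfar)] with ε hε hne
  exact integral_div_sub_eq_add_of_periodic hγ hφ hγper hφper
    (fun θ hθ => ne_add_mul_of_mem_slitPlane hν (sub_div_mem_slitPlane (hcross θ hθ) hε)) hne

theorem tendsto_integral_deriv_div_sub_jump (hT : 0 < T) (hγ : ContDiff ℝ 1 γ)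
    (hper : Function.Periodic γ T) (hinj : InjOn γ (Ico 0 T)) {θ₀ : ℝ} (hθ₀ : deriv γ θ₀ ≠ 0) :
    Tendsto (fun ε : ℝ =>
        (∫ θ in 0..T, deriv γ θ / (γ θ - (γ θ₀ + ε * (I * deriv γ θ₀)))) -
          ∫ θ in 0..T, deriv γ θ / (γ θ - (γ θ₀ - ε * (I * deriv γ θ₀))))
      (𝓝[>] 0) (𝓝 (2 * π * I)) := by
  have hγ' : Continuous (deriv γ) := hγ.continuous_deriv le_rfl
  obtain ⟨δ, ⟨hδ, hδT⟩, hcross, hleft, hright⟩ := exists_arc_crossing hθ₀ (half_pos hT)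
  set ν := I * deriv γ θ₀
  have hν : ν ≠ 0 := mul_ne_zero I_ne_zero hθ₀
  have hfar : ∀ θ ∈ uIcc (θ₀ + δ) (θ₀ - δ + T), γ θ ≠ γ θ₀ := by
    intro θ hθ heq
    rw [uIcc_of_le (by linarith)] at hθ
    have hθ_eq := injOn_Ico_add_of_periodic hT hper hinj θ₀
      ⟨by linarith [hθ.1], by linarith [hθ.2]⟩ ⟨le_rfl, by linarith⟩ heq
    linarith [hθ.1]
  have hjump := tendsto_integral_div_sub_jump_of_crossing hν
    (fun θ _ => (hγ.differentiable one_ne_zero θ).hasDerivAt) (hγ'.intervalIntegrable ..) hcross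
    hleft hright
  have hfar_tendsto (ν : ℂ) := (continuousAt_integral_div_sub (hγ'.intervalIntegrable ..)
    hγ.continuous.continuousOn hfar).tendsto.comp (tendsto_add_ofReal_mul (γ θ₀) ν)
  have hlim := hjump.add ((hfar_tendsto ν).sub (hfar_tendsto (-ν)))
  rw [sub_self, add_zero] at hlim
  have hcross_neg : ∀ θ ∈ uIcc (θ₀ - δ) (θ₀ + δ), ((γ θ - γ θ₀) / -ν).im = 0 → γ θ = γ θ₀ :=
    fun θ hθ him => hcross θ hθ (by simpa [div_neg] using him)
  refine hlim.congr' ?_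
  filter_upwards [eventually_integral_div_sub_eq_add_of_periodic hγ.continuous hγ' hper
      (periodic_deriv hper) hν hcross hfar,
    eventually_integral_div_sub_eq_add_of_periodic hγ.continuous hγ' hper
      (periodic_deriv hper) (neg_ne_zero.2 hν) hcross_neg hfar] with ε hpos hneg
  simp only [mul_neg, ← sub_eq_add_neg, Function.comp_apply] at hpos hneg ⊢
  rw [hpos, hneg]
  ring

theorem forall_ne_of_integral_deriv_div_sub_eq_const (hT : 0 < T) (hγ : ContDiff ℝ 1 γ)
    (hper : Function.Periodic γ T) (hinj : InjOn γ (Ico 0 T)) (hγ' : ∀ θ, deriv γ θ ≠ 0)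
    {U : Set ℂ} (hU : IsOpen U) {c : ℂ}
    (hc : ∀ w ∈ U, ∫ θ in 0..T, deriv γ θ / (γ θ - w) = c) {w : ℂ} (hw : w ∈ U) (θ : ℝ) :
    γ θ ≠ w := by
  rintro rfl
  have hU_nhds (ν : ℂ) : ∀ᶠ ε : ℝ in 𝓝[>] 0, γ θ + ε * ν ∈ U :=
    (tendsto_add_ofReal_mul (γ θ) ν).eventually_mem (hU.mem_nhds hw)
  have hzero : (2 * π * I : ℂ) = 0 := by
    refine tendsto_nhds_unique
      (tendsto_integral_deriv_div_sub_jump hT hγ hper hinj (hγ' θ)) (tendsto_const_nhds.congr' ?_)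
    filter_upwards [hU_nhds (I * deriv γ θ), hU_nhds (-(I * deriv γ θ))] with ε hpos hneg
    rw [mul_neg, ← sub_eq_add_neg] at hneg
    rw [hc _ hpos, hc _ hneg, sub_self]
  exact two_pi_I_ne_zero hzero

end Curve

theorem periodic_fderiv {E F : Type*} [NormedAddCommGroup E] [NormedSpace ℝ E]
    [NormedAddCommGroup F] [NormedSpace ℝ F] {f : E → F} {c : E} (hf : Function.Periodic f c) :
    Function.Periodic (fderiv ℝ f) c := fun p => by
  rw [← fderiv_comp_add_right, hf.funext]

theorem periodic_of_periodic_left {X : Type*} {F : ℝ × ℝ → X} {T : ℝ}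
    (hF : ∀ t, Function.Periodic (fun θ => F (θ, t)) T) : Function.Periodic F (T, 0) := fun p => by
  simpa only [Prod.add_def, add_zero] using hF p.2 p.1

section Slice

variable {E : Type*} [NormedAddCommGroup E] [NormedSpace ℝ E] {F : ℝ × ℝ → E}

theorem contDiff_slice_left {n : WithTop ℕ∞} (hF : ContDiff ℝ n F) (t : ℝ) :
    ContDiff ℝ n fun θ => F (θ, t) :=
  hF.comp (contDiff_id.prodMk contDiff_const)

theorem fderiv_apply_one_zero {θ t : ℝ} (hF : DifferentiableAt ℝ F (θ, t)) :
    fderiv ℝ F (θ, t) (1, 0) = deriv (fun x => F (x, t)) θ :=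
  (hF.hasFDerivAt.comp_hasDerivAt θ ((hasDerivAt_id θ).prodMk (hasDerivAt_const θ t))).deriv.symm

theorem fderiv_apply_zero_one {θ t : ℝ} (hF : DifferentiableAt ℝ F (θ, t)) :
    fderiv ℝ F (θ, t) (0, 1) = deriv (fun s => F (θ, s)) t :=
  (hF.hasFDerivAt.comp_hasDerivAt t ((hasDerivAt_const t θ).prodMk (hasDerivAt_id t))).deriv.symm

end Slice

section RegularValue

variable {E F : Type*} [NormedAddCommGroup E] [NormedSpace ℝ E] [NormedAddCommGroup F]
  [NormedSpace ℝ F] {h : E → F}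

/-- The regular values of a map `h` between spaces of equal dimension: the points over which `h`
is a local diffeomorphism. Points outside the range of `h` are regular values. -/
def regularValues (h : E → F) : Set F :=
  {w | ∀ p, h p = w → (fderiv ℝ h p).IsInvertible}

theorem dense_regularValues [FiniteDimensional ℝ E] [FiniteDimensional ℝ F]
    (hdim : Module.finrank ℝ E = Module.finrank ℝ F) (hh : Differentiable ℝ h) :
    Dense (regularValues h) := by
  borelize F
  let e : F ≃L[ℝ] E := .ofFinrankEq hdim.symm
  let D (v : F) : F →L[ℝ] F := (fderiv ℝ h (e v)).comp (e : F →L[ℝ] E)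
  have hD (v : F) : HasFDerivAt (h ∘ e) (D v) v := (hh (e v)).hasFDerivAt.comp v e.hasFDerivAt
  have hcritical : Measure.addHaar (h ∘ e '' {v | (D v).det = 0}) = 0 :=
    addHaar_image_eq_zero_of_det_fderivWithin_eq_zero _
      (fun v _ => (hD v).hasFDerivWithinAt) fun v hv => hv
  refine (Measure.dense_of_ae (compl_mem_ae_iff.2 hcritical)).mono fun w hw p hp => ?_
  have hdet : (D (e.symm p)).det ≠ 0 := fun h0 => hw ⟨e.symm p, h0, by simpa using hp⟩
  refine ⟨e.symm.trans ((D (e.symm p)).toContinuousLinearEquivOfDetNeZero hdet), ?_⟩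
  ext v
  simp [D]

theorem eventually_ne_of_isInvertible_fderiv {p : E} (hh : DifferentiableAt ℝ h p)
    (hp : (fderiv ℝ h p).IsInvertible) (w : F) : ∀ᶠ q in 𝓝[≠] p, h q ≠ w := by
  obtain ⟨e, he⟩ := hp
  exact hh.hasFDerivAt.eventually_ne (he ▸ ⟨_, e.antilipschitz⟩)

theorem isBigO_sub_of_isInvertible_fderiv {p : E} (hh : DifferentiableAt ℝ h p)
    (hp : (fderiv ℝ h p).IsInvertible) : (fun q => q - p) =O[𝓝 p] fun q => h q - h p := by
  obtain ⟨e, he⟩ := hp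
  have hrev : (fun q => q - p) =O[𝓝 p] fun q => fderiv ℝ h p (q - p) :=
    he ▸ e.isBigO_sub_rev (𝓝 p) p
  have hadd := (hh.hasFDerivAt.isLittleO.trans_isBigO hrev).right_isBigO_add
  exact hrev.trans (hadd.congr_right fun q => sub_add_cancel ..)

theorem finite_inter_preimage_of_mem_regularValues (hh : Differentiable ℝ h) {K : Set E}
    (hK : IsCompact K) {w : F} (hw : w ∈ regularValues h) : (K ∩ h ⁻¹' {w}).Finite := by
  refine (hK.inter_right (isClosed_singleton.preimage hh.continuous)).finite
    (isDiscrete_iff_nhdsNE.2 fun p hp => ?_)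
  rw [inf_principal_eq_bot]
  filter_upwards [eventually_ne_of_isInvertible_fderiv (hh p) (hw p hp.2) w]
    with q hq hqK using hq hqK.2

end RegularValue

section DerivAlong

variable {E : Type*} [NormedAddCommGroup E] [NormedSpace ℝ E] {h f ψ : E → ℂ} {k : ℂ} {p : E}

/-- `f` has complex derivative `k` with respect to `h` at `p`, that is, `df = k dh` at `p`. This is
the coordinate-free form of `X`-holomorphy, in which `k` plays the role of the derivative of the
function `g` in `f = g ∘ h`. -/
def HasDerivAlong (h f : E → ℂ) (k : ℂ) (p : E) : Prop :=
  HasFDerivAt f (k • fderiv ℝ h p) p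

namespace HasDerivAlong

theorem div_sub (hf : HasDerivAlong h f k p) (hh : DifferentiableAt ℝ h p) {w : ℂ}
    (hw : h p ≠ w) (c : ℂ) :
    HasDerivAlong h (fun q => (f q - c) / (h q - w))
      (k / (h p - w) - (f p - c) / (h p - w) ^ 2) p := by
  have hne : h p - w ≠ 0 := sub_ne_zero.2 hw
  have hinv : HasFDerivAt (fun q => (h q - w)⁻¹) (-((h p - w) ^ 2)⁻¹ • fderiv ℝ h p) p :=
    (hasDerivAt_inv hne).comp_hasFDerivAt p (hh.hasFDerivAt.sub_const w)
  simp only [div_eq_mul_inv]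
  refine ((hf.sub_const c).mul hinv).congr_fderiv ?_
  module

theorem tendsto_div_sub (hf : HasDerivAlong h f k p) (hh : DifferentiableAt ℝ h p)
    (hp : (fderiv ℝ h p).IsInvertible) :
    Tendsto (fun q => (f q - f p) / (h q - h p)) (𝓝[≠] p) (𝓝 k) := by
  have hzero : HasFDerivAt (fun q => f q - k * h q) (0 : E →L[ℝ] ℂ) p := by
    simpa using HasFDerivAt.fun_sub hf (hh.hasFDerivAt.const_mul k)
  have hremainder : Tendsto (fun q => (f q - k * h q - (f p - k * h p)) / (h q - h p))
      (𝓝[≠] p) (𝓝 0) := by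
    have hlittle := hzero.isLittleO.trans_isBigO (isBigO_sub_of_isInvertible_fderiv hh hp)
    simpa using hlittle.tendsto_div_nhds_zero.mono_left nhdsWithin_le_nhds
  have hlim := hremainder.const_add k
  rw [add_zero] at hlim
  refine hlim.congr' ?_
  filter_upwards [eventually_ne_of_isInvertible_fderiv hh hp (h p)] with q hq
  have hq' := sub_ne_zero.2 hq
  field_simp
  ring

theorem hasFDerivAt_mul_fderiv (hψ : HasDerivAlong h ψ k p) (hh : ContDiffAt ℝ 2 h p) (v : E) :
    HasFDerivAt (fun q => ψ q * fderiv ℝ h q v)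
      (ψ p • (fderiv ℝ (fderiv ℝ h) p).flip v + fderiv ℝ h p v • k • fderiv ℝ h p) p :=
  hψ.mul (((hh.fderiv_right (m := 1) le_rfl).differentiableAt one_ne_zero).hasFDerivAt.clm_apply
    (hasFDerivAt_const v p) |>.congr_fderiv (by simp))

/-- The form `ψ dh` is closed, because `d(ψ dh) = dψ ∧ dh = k dh ∧ dh = 0`. -/
theorem fderiv_mul_fderiv_comm (hψ : HasDerivAlong h ψ k p) (hh : ContDiffAt ℝ 2 h p) (v w : E) :
    fderiv ℝ (fun q => ψ q * fderiv ℝ h q v) p w =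
      fderiv ℝ (fun q => ψ q * fderiv ℝ h q w) p v := by
  have hsymm : IsSymmSndFDerivAt ℝ h p := hh.isSymmSndFDerivAt (by simp)
  rw [(hψ.hasFDerivAt_mul_fderiv hh v).fderiv, (hψ.hasFDerivAt_mul_fderiv hh w).fderiv]
  simp only [_root_.add_apply, _root_.smul_apply, ContinuousLinearMap.flip_apply, smul_eq_mul,
    hsymm.eq v w]
  ring

end HasDerivAlong

end DerivAlong

theorem integral_boundary_rect_mul_fderiv_eq {h ψ : ℝ × ℝ → ℂ} (hh : ContDiff ℝ 2 h)
    {a₁ a₂ b₁ b₂ : ℝ} {s : Set (ℝ × ℝ)} (hs : s.Countable)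
    (hψ : ContinuousOn ψ (uIcc a₁ b₁ ×ˢ uIcc a₂ b₂))
    (hψ' : ∀ p ∈ Ioo (min a₁ b₁) (max a₁ b₁) ×ˢ Ioo (min a₂ b₂) (max a₂ b₂) \ s,
      ∃ k, HasDerivAlong h ψ k p) :
    (∫ θ in a₁..b₁, ψ (θ, b₂) * fderiv ℝ h (θ, b₂) (1, 0)) -
        ∫ θ in a₁..b₁, ψ (θ, a₂) * fderiv ℝ h (θ, a₂) (1, 0) =
      (∫ t in a₂..b₂, ψ (b₁, t) * fderiv ℝ h (b₁, t) (0, 1)) -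
        ∫ t in a₂..b₂, ψ (a₁, t) * fderiv ℝ h (a₁, t) (0, 1) := by
  let S := Ioo (min a₁ b₁) (max a₁ b₁) ×ˢ Ioo (min a₂ b₂) (max a₂ b₂) \ s
  let ω (v q : ℝ × ℝ) : ℂ := ψ q * fderiv ℝ h q v
  have hω_cont (v : ℝ × ℝ) : ContinuousOn (ω v) (uIcc a₁ b₁ ×ˢ uIcc a₂ b₂) :=
    hψ.mul ((hh.continuous_fderiv two_ne_zero).clm_apply continuous_const).continuousOn
  have hω_deriv (v : ℝ × ℝ) : ∀ p ∈ S, HasFDerivAt (ω v) (S.indicator (fderiv ℝ (ω v)) p) p := by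
    intro p hp
    obtain ⟨k, hk⟩ := hψ' p hp
    rw [indicator_of_mem hp]
    exact (hk.hasFDerivAt_mul_fderiv hh.contDiffAt v).differentiableAt.hasFDerivAt
  have hclosed (p : ℝ × ℝ) : -S.indicator (fderiv ℝ (ω (0, 1))) p (1, 0) +
      S.indicator (fderiv ℝ (ω (1, 0))) p (0, 1) = 0 := by
    by_cases hp : p ∈ S
    · obtain ⟨k, hk⟩ := hψ' p hp
      simp only [indicator_of_mem hp]
      rw [hk.fderiv_mul_fderiv_comm hh.contDiffAt, neg_add_cancel]
    · simp [indicator_of_notMem hp]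
  have hstokes := integral2_divergence_prod_of_hasFDerivAt_off_countable
    (fun p => -ω (0, 1) p) (ω (1, 0)) _ _ a₁ a₂ b₁ b₂ s hs (hω_cont _).neg (hω_cont _)
    (fun p hp => (hω_deriv (0, 1) p hp).neg) (hω_deriv (1, 0))
  simp only [_root_.neg_apply, hclosed, integrableOn_zero, forall_const,
    intervalIntegral.integral_zero, intervalIntegral.integral_neg] at hstokes
  linear_combination -hstokes

section DividedDifference

variable {E : Type*} {h f k : E → ℂ} {w c : ℂ} {p : E}

/-- The difference quotient `(f - c) / (h - w)`, completed by the values of `k` over `w`. It is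
meant for `c` the value of `f` over `w` and `k` the derivative of `f` along `h`. -/
noncomputable def dividedDifference (h f k : E → ℂ) (w c : ℂ) (p : E) : ℂ :=
  if h p = w then k p else (f p - c) / (h p - w)

theorem dividedDifference_of_eq (hp : h p = w) : dividedDifference h f k w c p = k p :=
  if_pos hp

theorem dividedDifference_of_ne (hp : h p ≠ w) :
    dividedDifference h f k w c p = (f p - c) / (h p - w) :=
  if_neg hp

theorem periodic_dividedDifference [Add E] {v : E} (hh : Function.Periodic h v)
    (hf : Function.Periodic f v) (hk : Function.Periodic k v) :
    Function.Periodic (dividedDifference h f k w c) v := fun p => by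
  simp only [dividedDifference, hh p, hf p, hk p]

variable [NormedAddCommGroup E] [NormedSpace ℝ E]

theorem HasDerivAlong.dividedDifference_of_ne {m : ℂ} (hf : HasDerivAlong h f m p)
    (hh : DifferentiableAt ℝ h p) (hp : h p ≠ w) :
    HasDerivAlong h (dividedDifference h f k w c)
      (m / (h p - w) - (f p - c) / (h p - w) ^ 2) p :=
  (hf.div_sub hh hp c).congr_of_eventuallyEq <|
    (hh.continuousAt.eventually_ne hp).mono fun _ hq => _root_.dividedDifference_of_ne hq

theorem HasDerivAlong.continuousAt_dividedDifference (hf : HasDerivAlong h f (k p) p)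
    (hh : DifferentiableAt ℝ h p) (hw : w ∈ regularValues h) (hc : h p = w → f p = c) :
    ContinuousAt (dividedDifference h f k w c) p := by
  by_cases hp : h p = w
  · rw [continuousAt_iff_punctured_nhds, dividedDifference_of_eq hp]
    refine (hf.tendsto_div_sub hh (hw p hp)).congr' ?_
    filter_upwards [eventually_ne_of_isInvertible_fderiv hh (hw p hp) w] with q hq
    rw [_root_.dividedDifference_of_ne hq, hp, hc hp]
  · exact (hf.dividedDifference_of_ne hh hp).continuousAt

end DividedDifference

section Annulus

variable {h f k ψ : ℝ × ℝ → ℂ} {T a b : ℝ}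

theorem integral_mul_fderiv_eq_of_periodic (hh : ContDiff ℝ 2 h)
    (hhper : Function.Periodic h (T, 0)) (hψper : Function.Periodic ψ (T, 0))
    {s : Set (ℝ × ℝ)} (hs : s.Countable) (hψ : ContinuousOn ψ (uIcc 0 T ×ˢ uIcc a b))
    (hψ' : ∀ p ∈ uIcc 0 T ×ˢ uIcc a b \ s, ∃ k, HasDerivAlong h ψ k p) :
    ∫ θ in 0..T, ψ (θ, b) * fderiv ℝ h (θ, b) (1, 0) =
      ∫ θ in 0..T, ψ (θ, a) * fderiv ℝ h (θ, a) (1, 0) := by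
  have hψT (t : ℝ) : ψ (T, t) = ψ (0, t) := by simpa using hψper (0, t)
  have hhT (t : ℝ) : fderiv ℝ h (T, t) = fderiv ℝ h (0, t) := by
    simpa using periodic_fderiv hhper (0, t)
  have hstokes := integral_boundary_rect_mul_fderiv_eq hh hs hψ fun p hp =>
    hψ' p ⟨prod_mono Ioo_subset_Icc_self Ioo_subset_Icc_self hp.1, hp.2⟩
  simp only [hψT, hhT, sub_self] at hstokes
  exact sub_eq_zero.1 hstokes

theorem integral_sub_div_sub_mul_fderiv_eq (hh : ContDiff ℝ 2 h)
    (hhper : Function.Periodic h (T, 0)) (hfper : Function.Periodic f (T, 0))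
    (hkper : Function.Periodic k (T, 0))
    (hf : ∀ θ, ∀ t ∈ uIcc a b, HasDerivAlong h f (k (θ, t)) (θ, t)) {w c : ℂ}
    (hw : w ∈ regularValues h) (hc : ∀ θ, ∀ t ∈ uIcc a b, h (θ, t) = w → f (θ, t) = c)
    (ha : ∀ θ, h (θ, a) ≠ w) (hb : ∀ θ, h (θ, b) ≠ w) :
    ∫ θ in 0..T, (f (θ, b) - c) / (h (θ, b) - w) * fderiv ℝ h (θ, b) (1, 0) =
      ∫ θ in 0..T, (f (θ, a) - c) / (h (θ, a) - w) * fderiv ℝ h (θ, a) (1, 0) := by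
  have hh' : Differentiable ℝ h := hh.differentiable two_ne_zero
  have hfinite := finite_inter_preimage_of_mem_regularValues hh'
    (isCompact_uIcc.prod isCompact_uIcc : IsCompact (uIcc 0 T ×ˢ uIcc a b)) hw
  have hstokes := integral_mul_fderiv_eq_of_periodic hh hhper
    (periodic_dividedDifference (w := w) (c := c) hhper hfper hkper) hfinite.countable
    (fun p hp => ((hf p.1 p.2 hp.2).continuousAt_dividedDifference (hh' p) hw
      (hc p.1 p.2 hp.2)).continuousWithinAt)
    (fun p hp => ⟨_, (hf p.1 p.2 hp.1.2).dividedDifference_of_ne (hh' p)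
      fun hpw => hp.2 ⟨hp.1, hpw⟩⟩)
  simpa only [dividedDifference_of_ne (ha _), dividedDifference_of_ne (hb _)] using hstokes

theorem hasDerivAlong_of_deriv_snd_mul_eq {θ t : ℝ} (hh : DifferentiableAt ℝ h (θ, t))
    (hf : DifferentiableAt ℝ f (θ, t)) (hh' : deriv (fun x => h (x, t)) θ ≠ 0)
    (hfh : deriv (fun s => f (θ, s)) t * deriv (fun x => h (x, t)) θ =
      deriv (fun x => f (x, t)) θ * deriv (fun s => h (θ, s)) t) :
    HasDerivAlong h f (deriv (fun x => f (x, t)) θ / deriv (fun x => h (x, t)) θ) (θ, t) := by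
  refine hf.hasFDerivAt.congr_fderiv (ContinuousLinearMap.prod_ext ?_ ?_) <;>
    refine ContinuousLinearMap.ext_ring ?_
  · simpa [fderiv_apply_one_zero hf, fderiv_apply_one_zero hh] using
      (div_mul_cancel₀ _ hh').symm
  · simpa [fderiv_apply_zero_one hf, fderiv_apply_zero_one hh, div_mul_eq_mul_div] using
      (eq_div_iff hh').2 hfh

theorem integral_sub_const_div_sub_mul {γ φ u : ℝ → ℂ} {w : ℂ}
    (hγ : ContinuousOn γ (uIcc a b)) (hφ : IntervalIntegrable φ volume a b)
    (hu : ContinuousOn u (uIcc a b)) (hw : ∀ θ ∈ uIcc a b, γ θ ≠ w) (c : ℂ) :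
    ∫ θ in a..b, (u θ - c) / (γ θ - w) * φ θ =
      (∫ θ in a..b, u θ * φ θ / (γ θ - w)) - c * ∫ θ in a..b, φ θ / (γ θ - w) := by
  rw [← intervalIntegral.integral_const_mul, ← intervalIntegral.integral_sub
    (intervalIntegrable_div_sub (hφ.continuousOn_mul hu) hγ hw)
    ((intervalIntegrable_div_sub hφ hγ hw).const_mul c)]
  congr! 2 with θ
  ring

theorem integral_mul_deriv_div_sub_sub_eq_of_mem_regularValues (hh : ContDiff ℝ 2 h)
    (hhper : Function.Periodic h (T, 0)) (hfper : Function.Periodic f (T, 0))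
    (hkper : Function.Periodic k (T, 0))
    (hf : ∀ θ, ∀ t ∈ uIcc a b, HasDerivAlong h f (k (θ, t)) (θ, t)) {w c : ℂ}
    (hw : w ∈ regularValues h) (hc : ∀ θ, ∀ t ∈ uIcc a b, h (θ, t) = w → f (θ, t) = c)
    (ha : ∀ θ, h (θ, a) ≠ w) (hb : ∀ θ, h (θ, b) ≠ w) :
    (∫ θ in 0..T, f (θ, b) * deriv (fun x => h (x, b)) θ / (h (θ, b) - w)) -
        ∫ θ in 0..T, f (θ, a) * deriv (fun x => h (x, a)) θ / (h (θ, a) - w) =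
      c * ((∫ θ in 0..T, deriv (fun x => h (x, b)) θ / (h (θ, b) - w)) -
        ∫ θ in 0..T, deriv (fun x => h (x, a)) θ / (h (θ, a) - w)) := by
  have hsplit : ∀ t ∈ uIcc a b, (∀ θ, h (θ, t) ≠ w) →
      ∫ θ in 0..T, (f (θ, t) - c) / (h (θ, t) - w) * deriv (fun x => h (x, t)) θ =
        (∫ θ in 0..T, f (θ, t) * deriv (fun x => h (x, t)) θ / (h (θ, t) - w)) -
          c * ∫ θ in 0..T, deriv (fun x => h (x, t)) θ / (h (θ, t) - w) := by
    intro t ht htw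
    have hcurve := contDiff_slice_left (hh.of_le one_le_two) t
    have hf_cont : Continuous fun x => f (x, t) := continuous_iff_continuousAt.2 fun θ =>
      (hf θ t ht).continuousAt.comp (f := fun x => (x, t)) (by fun_prop)
    exact integral_sub_const_div_sub_mul hcurve.continuous.continuousOn
      ((hcurve.continuous_deriv le_rfl).intervalIntegrable ..) hf_cont.continuousOn
      (fun θ _ => htw θ) c
  have hstokes := integral_sub_div_sub_mul_fderiv_eq hh hhper hfper hkper hf hw hc ha hb
  simp only [fderiv_apply_one_zero (hh.differentiable two_ne_zero _)] at hstokes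
  rw [hsplit a left_mem_uIcc ha, hsplit b right_mem_uIcc hb] at hstokes
  linear_combination hstokes

theorem continuousOn_integral_slice_mul_deriv_div_sub {u : ℝ → ℂ} {t : ℝ} (hh : ContDiff ℝ 1 h)
    (hu : Continuous u) {U : Set ℂ} (hU : ∀ z ∈ U, ∀ θ, h (θ, t) ≠ z) :
    ContinuousOn
      (fun z => ∫ θ in a..b, u θ * deriv (fun x => h (x, t)) θ / (h (θ, t) - z)) U := by
  have hcurve := contDiff_slice_left hh t
  exact fun z hz => (continuousAt_integral_div_sub
    ((hu.mul (hcurve.continuous_deriv le_rfl)).intervalIntegrable ..)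
    hcurve.continuous.continuousOn fun θ _ => hU z hz θ).continuousWithinAt

theorem integral_mul_deriv_div_sub_sub_eq (hh : ContDiff ℝ 2 h)
    (hhper : Function.Periodic h (T, 0)) (hfper : Function.Periodic f (T, 0))
    (hkper : Function.Periodic k (T, 0))
    (hf : ∀ θ, ∀ t ∈ uIcc a b, HasDerivAlong h f (k (θ, t)) (θ, t)) {U : Set ℂ} (hU : IsOpen U)
    {g : ℂ → ℂ} (hg : ContinuousOn g U)
    (hgf : ∀ θ, ∀ t ∈ uIcc a b, h (θ, t) ∈ U → f (θ, t) = g (h (θ, t)))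
    (ha : ∀ z ∈ U, ∀ θ, h (θ, a) ≠ z) (hb : ∀ z ∈ U, ∀ θ, h (θ, b) ≠ z) {z : ℂ} (hz : z ∈ U) :
    (∫ θ in 0..T, f (θ, b) * deriv (fun x => h (x, b)) θ / (h (θ, b) - z)) -
        ∫ θ in 0..T, f (θ, a) * deriv (fun x => h (x, a)) θ / (h (θ, a) - z) =
      g z * ((∫ θ in 0..T, deriv (fun x => h (x, b)) θ / (h (θ, b) - z)) -
        ∫ θ in 0..T, deriv (fun x => h (x, a)) θ / (h (θ, a) - z)) := by
  have hf_cont : ∀ t ∈ uIcc a b, Continuous fun θ => f (θ, t) := fun t ht =>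
    continuous_iff_continuousAt.2 fun θ =>
      (hf θ t ht).continuousAt.comp (f := fun x => (x, t)) (by fun_prop)
  have hcont (t : ℝ) (u : ℝ → ℂ) (hu : Continuous u) (ht : ∀ z ∈ U, ∀ θ, h (θ, t) ≠ z) :=
    continuousOn_integral_slice_mul_deriv_div_sub (a := 0) (b := T) (hh.of_le one_le_two) hu ht
  have hwind (t : ℝ) (ht : ∀ z ∈ U, ∀ θ, h (θ, t) ≠ z) : ContinuousOn
      (fun z => ∫ θ in 0..T, deriv (fun x => h (x, t)) θ / (h (θ, t) - z)) U := by
    simpa only [one_mul] using hcont t (fun _ => 1) continuous_const ht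
  have hregular : EqOn _ _ (U ∩ regularValues h) := fun w hw =>
    integral_mul_deriv_div_sub_sub_eq_of_mem_regularValues hh hhper hfper hkper hf hw.2
      (fun θ t ht hθ => by rw [hgf θ t ht (hθ ▸ hw.1), hθ]) (ha w hw.1) (hb w hw.1)
  exact hregular.of_subset_closure
    ((hcont b _ (hf_cont b right_mem_uIcc) hb).sub (hcont a _ (hf_cont a left_mem_uIcc) ha))
    (hg.mul ((hwind b hb).sub (hwind a ha))) inter_subset_left
    ((dense_regularValues (by simp) (hh.differentiable two_ne_zero)).open_subset_closure_inter hU)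
    hz

end Annulus

theorem cauchy_integral_formula_for_XHolomorphic_general
    (h : ℝ × ℝ → ℂ)
    (hsm : ContDiff ℝ 2 h)
    (hper : ∀ θ t, h (θ + 2 * π, t) = h (θ, t))
    (hinj_in : InjOn (fun θ => h (θ, 0)) (Ico 0 (2 * π)))
    (hinj_out : InjOn (fun θ => h (θ, 1)) (Ico 0 (2 * π)))
    (hderiv : ∀ θ : ℝ, ∀ t ∈ Icc (0 : ℝ) 1, deriv (fun x => h (x, t)) θ ≠ 0)
    (X : ℝ × ℝ → ℂ)
    (hX : ∀ θ t, X (θ, t) = -(deriv (fun s => h (θ, s)) t) / deriv (fun x => h (x, t)) θ)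
    (f : ℝ × ℝ → ℂ)
    (hf_per : ∀ θ t, f (θ + 2 * π, t) = f (θ, t))
    (hf_diff : Differentiable ℝ f)
    (hf_holo : ∀ θ : ℝ, ∀ t ∈ Icc (0 : ℝ) 1,
      deriv (fun s => f (θ, s)) t = -X (θ, t) * deriv (fun x => f (x, t)) θ)
    (U : Set ℂ) (hU : IsOpen U)
    (g : ℂ → ℂ) (hg_cont : ContinuousOn g U)
    (hg_fact : ∀ θ : ℝ, ∀ t ∈ Icc (0 : ℝ) 1, h (θ, t) ∈ U → f (θ, t) = g (h (θ, t)))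
    (hwind_out : ∀ z ∈ U, (2 * π * I)⁻¹ *
      ∫ θ in (0 : ℝ)..(2 * π), deriv (fun x => h (x, 1)) θ / (h (θ, 1) - z) = 1)
    (hwind_in : ∀ z ∈ U, (2 * π * I)⁻¹ *
      ∫ θ in (0 : ℝ)..(2 * π), deriv (fun x => h (x, 0)) θ / (h (θ, 0) - z) = 0) :
    ∀ z ∈ U, g z = (2 * π * I)⁻¹ *
      ((∫ θ in (0 : ℝ)..(2 * π), f (θ, 1) * deriv (fun x => h (x, 1)) θ / (h (θ, 1) - z)) -
        ∫ θ in (0 : ℝ)..(2 * π), f (θ, 0) * deriv (fun x => h (x, 0)) θ / (h (θ, 0) - z)) := by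
  have hcurve_ne : ∀ t ∈ Icc (0 : ℝ) 1, InjOn (fun θ => h (θ, t)) (Ico 0 (2 * π)) → ∀ c,
      (∀ z ∈ U, (2 * π * I)⁻¹ *
        ∫ θ in (0 : ℝ)..(2 * π), deriv (fun x => h (x, t)) θ / (h (θ, t) - z) = c) →
      ∀ z ∈ U, ∀ θ, h (θ, t) ≠ z := fun t ht hinj c hc z hz =>
    forall_ne_of_integral_deriv_div_sub_eq_const two_pi_pos
      (contDiff_slice_left (hsm.of_le one_le_two) t) (fun θ => hper θ t) hinj
      (fun θ => hderiv θ t ht) hU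
      (fun v hv => (inv_mul_eq_iff_eq_mul₀ two_pi_I_ne_zero).1 (hc v hv)) hz
  have hhper := periodic_of_periodic_left fun t θ => hper θ t
  have hfper := periodic_of_periodic_left fun t θ => hf_per θ t
  let k (p : ℝ × ℝ) : ℂ := deriv (fun x => f (x, p.2)) p.1 / deriv (fun x => h (x, p.2)) p.1
  have hkper : Function.Periodic k (2 * π, 0) := periodic_of_periodic_left fun t =>
    (periodic_deriv (γ := fun x => f (x, t)) fun θ => hf_per θ t).div
      (periodic_deriv (γ := fun x => h (x, t)) fun θ => hper θ t)
  have hk : ∀ θ, ∀ t ∈ Icc (0 : ℝ) 1, HasDerivAlong h f (k (θ, t)) (θ, t) := by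
    intro θ t ht
    have hne := hderiv θ t ht
    refine hasDerivAlong_of_deriv_snd_mul_eq (hsm.differentiable two_ne_zero _) (hf_diff _) hne ?_
    rw [hf_holo θ t ht, hX]
    field_simp
  rw [← uIcc_of_le zero_le_one] at hk hg_fact
  intro z hz
  rw [integral_mul_deriv_div_sub_sub_eq hsm hhper hfper hkper hk hU hg_cont hg_fact
    (hcurve_ne 0 (left_mem_Icc.2 zero_le_one) hinj_in 0 hwind_in)
    (hcurve_ne 1 (right_mem_Icc.2 zero_le_one) hinj_out 1 hwind_out) hz]
  linear_combination g z * hwind_in z hz - g z * hwind_out z hz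

theorem cauchy_integral_formula_for_XHolomorphic
    (h : ℝ × ℝ → ℂ)
    (hsm : ContDiff ℝ (⊤ : ℕ∞) h)
    (hper : ∀ θ t, h (θ + 2 * π, t) = h (θ, t))
    (hinj : ∀ t ∈ Icc (0:ℝ) 1, InjOn (fun θ => h (θ, t)) (Ico 0 (2 * π)))
    (hderiv : ∀ θ : ℝ, ∀ t ∈ Icc (0:ℝ) 1, deriv (fun x => h (x, t)) θ ≠ 0)
    (hinward : ∀ θ : ℝ, ∀ t ∈ Icc (0:ℝ) 1,
      (deriv (fun s => h (θ, s)) t / deriv (fun x => h (x, t)) θ).im ≤ 0)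
    (A : Set ℂ) (hA : A = h '' (univ ×ˢ Icc (0:ℝ) 1))
    (hfront : frontier A ⊆ (range fun θ => h (θ, 0)) ∪ (range fun θ => h (θ, 1)))
    (X : ℝ × ℝ → ℂ)
    (hX : ∀ θ t, X (θ, t) = -(deriv (fun s => h (θ, s)) t) / deriv (fun x => h (x, t)) θ)
    (f : ℝ × ℝ → ℂ)
    (hf_per : ∀ θ t, f (θ + 2 * π, t) = f (θ, t))
    (hf_sm : ContDiff ℝ (⊤ : ℕ∞) f)
    (hf_holo : ∀ θ : ℝ, ∀ t ∈ Icc (0:ℝ) 1,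
      deriv (fun s => f (θ, s)) t = -X (θ, t) * deriv (fun x => f (x, t)) θ)
    (g : ℂ → ℂ) (hg_cont : ContinuousOn g A)
    (hg_fact : ∀ θ : ℝ, ∀ t ∈ Icc (0:ℝ) 1, f (θ, t) = g (h (θ, t)))
    (hwind_out : ∀ z ∈ interior A,
      (2 * π * I)⁻¹ *
        ∫ θ in (0:ℝ)..(2 * π), deriv (fun x => h (x, 1)) θ / (h (θ, 1) - z) = 1)
    (hwind_in : ∀ z ∈ interior A,
      (2 * π * I)⁻¹ *
        ∫ θ in (0:ℝ)..(2 * π), deriv (fun x => h (x, 0)) θ / (h (θ, 0) - z) = 0) :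
    ∀ z ∈ interior A,
      g z = (2 * π * I)⁻¹ *
        ((∫ θ in (0:ℝ)..(2 * π), f (θ, 1) * deriv (fun x => h (x, 1)) θ / (h (θ, 1) - z)) -
         (∫ θ in (0:ℝ)..(2 * π), f (θ, 0) * deriv (fun x => h (x, 0)) θ / (h (θ, 0) - z))) :=
  cauchy_integral_formula_for_XHolomorphic_general h (contDiff_infty.1 hsm 2) hper
    (hinj 0 (left_mem_Icc.2 zero_le_one)) (hinj 1 (right_mem_Icc.2 zero_le_one)) hderiv X hX
    f hf_per (hf_sm.differentiable (by simp)) hf_holo (interior A) isOpen_interior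
    g (hg_cont.mono interior_subset) (fun θ t ht _ => hg_fact θ t ht) hwind_out hwind_in
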